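/- arXiv:math/0501179 — 3 statements merged into one kernel-verified Lean document; each statement's English description precedes it below -/
import Mathlib

section
/- Let M be an acyclic matching on the graph G(C•) of the chain complex C•. Then the Morse complex C•^M is a chain complex of free R-modules (i.e. ∂^M ∘ ∂^M = 0) which is chain homotopy equivalent to C•; in particular H_i(C•) ≅ H_i(C•^M) for all i ≥ 0. -/
/-!
Algebraic Discrete Morse theory (Jöllenbeck–Welker).

Setup: `R` is a (possibly noncommutative) ring and `C` is a chain complex of free
left `R`-modules `C i = X i → R` with fixed finite basis `X i` in homological
degree `i`; the differential is `∂ i (c) = ∑ c', d i c c' • c'` (we record only the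
matrix of coefficients `d`).  `M` is a matching on the associated weighted directed
graph, `MStep` describes the edges of the modified graph `G_M`, `MPath` the directed
paths, `Gamma v w` the sum of the weights of all paths from `v` to `w`, `Crit` the
critical basis elements, `DMmap` the Morse differential, and `fmap`, `gmap`, `chimap`
the comparison maps and the homotopy.
-/

attribute [local instance] Classical.propDecidable

noncomputable section

section ADMT

variable {R : Type} [Ring R]
variable (X : ℕ → Type) [∀ i, Fintype (X i)]
variable (d : ∀ i, X (i + 1) → X i → R)
variable (M : ∀ i, Set (X (i + 1) × X i))

/-- The family of coefficients `d` of the differentials satisfies `∂ ∘ ∂ = 0`,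
i.e. `C` is a chain complex. -/
def IsComplexAux : Prop :=
  ∀ (i : ℕ) (c : X (i + 2)) (c'' : X i),
    ∑ c' : X (i + 1), d (i + 1) c c' * d i c' c'' = 0

/-- The edges of the modified graph `G_M`: downward steps along non-matched edges
of the graph `G(C)` (weight `d i c c'`), and upward reversed steps along matched
edges (weight `-(d i c c')⁻¹`). -/
inductive MStep : (Σ i, X i) → (Σ i, X i) → Prop
  | down (i : ℕ) (c : X (i + 1)) (c' : X i) (hne : d i c c' ≠ 0)
      (hnm : (c, c') ∉ M i) : MStep ⟨i + 1, c⟩ ⟨i, c'⟩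
  | up (i : ℕ) (c : X (i + 1)) (c' : X i) (hmem : (c, c') ∈ M i) :
      MStep ⟨i, c'⟩ ⟨i + 1, c⟩

/-- `M` is an acyclic matching: all edges of `M` are edges of the graph `G(C)`,
every vertex lies in at most one edge of `M`, the weights of matched edges are
central units of `R`, and the modified graph `G_M` has no directed cycle. -/
def IsAcyclicMatching : Prop :=
  (∀ (i : ℕ) (c : X (i + 1)) (c' : X i), (c, c') ∈ M i → d i c c' ≠ 0) ∧
  (∀ (i : ℕ) (c : X (i + 1)) (c₁ c₂ : X i), (c, c₁) ∈ M i → (c, c₂) ∈ M i → c₁ = c₂) ∧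
  (∀ (i : ℕ) (c₁ c₂ : X (i + 1)) (c' : X i), (c₁, c') ∈ M i → (c₂, c') ∈ M i → c₁ = c₂) ∧
  (∀ (i : ℕ) (a : X (i + 2)) (b : X (i + 1)) (c : X i),
      (a, b) ∈ M (i + 1) → (b, c) ∈ M i → False) ∧
  (∀ (i : ℕ) (c : X (i + 1)) (c' : X i), (c, c') ∈ M i →
      d i c c' ∈ Set.center R ∧ IsUnit (d i c c')) ∧
  (∀ v : Σ i, X i, ¬ Relation.TransGen (MStep X d M) v v)

/-- Directed paths in the modified graph `G_M`. -/
inductive MPath : (Σ i, X i) → (Σ i, X i) → Type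
  | nil (v : Σ i, X i) : MPath v v
  | down (i : ℕ) (c : X (i + 1)) (c' : X i) (hne : d i c c' ≠ 0)
      (hnm : (c, c') ∉ M i) (w : Σ i, X i) (p : MPath ⟨i, c'⟩ w) :
      MPath ⟨i + 1, c⟩ w
  | up (i : ℕ) (c : X (i + 1)) (c' : X i) (hmem : (c, c') ∈ M i)
      (w : Σ i, X i) (p : MPath ⟨i + 1, c⟩ w) : MPath ⟨i, c'⟩ w

/-- The weight of a path: the product of the weights of its edges.  A non-matched
edge `c → c'` has weight `d i c c'`; a reversed matched edge has weight
`-(d i c c')⁻¹`. -/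
def MPath.weight : ∀ {v w : Σ i, X i}, MPath X d M v w → R
  | _, _, .nil _ => 1
  | _, _, .down i c c' _ _ _ p => d i c c' * MPath.weight p
  | _, _, .up i c c' _ _ p => -(Ring.inverse (d i c c')) * MPath.weight p

/-- The first step of the path decreases the homological degree. -/
def MPath.firstDown : ∀ {v w : Σ i, X i}, MPath X d M v w → Prop
  | _, _, .nil _ => False
  | _, _, .down _ _ _ _ _ _ _ => True
  | _, _, .up _ _ _ _ _ _ => False

/-- The first step of the path increases the homological degree. -/
def MPath.firstUp : ∀ {v w : Σ i, X i}, MPath X d M v w → Prop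
  | _, _, .nil _ => False
  | _, _, .down _ _ _ _ _ _ _ => False
  | _, _, .up _ _ _ _ _ _ => True

/-- `Γ(v,w)`: the sum of the weights of all directed paths from `v` to `w` in `G_M`
(under the acyclicity hypothesis there are only finitely many such paths). -/
def Gamma (v w : Σ i, X i) : R := ∑ᶠ p : MPath X d M v w, MPath.weight X d M p

/-- `Γ↓(v,w)`: the sum of the weights of all paths from `v` to `w` whose first step
decreases the homological degree. -/
def GammaDown (v w : Σ i, X i) : R :=
  ∑ᶠ (p : MPath X d M v w) (_ : MPath.firstDown X d M p), MPath.weight X d M p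

/-- `Γ↑(v,w)`: the sum of the weights of all paths from `v` to `w` whose first step
increases the homological degree. -/
def GammaUp (v w : Σ i, X i) : R :=
  ∑ᶠ (p : MPath X d M v w) (_ : MPath.firstUp X d M p), MPath.weight X d M p

/-- A basis element is critical if it lies in no edge of `M`. -/
def CriticalV (v : Σ i, X i) : Prop :=
  ∀ (j : ℕ) (a : X (j + 1)) (b : X j), (a, b) ∈ M j →
    v ≠ ⟨j + 1, a⟩ ∧ v ≠ ⟨j, b⟩

/-- The critical basis elements of homological degree `i`. -/
abbrev Crit (i : ℕ) := {c : X i // CriticalV X M ⟨i, c⟩}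

/-- The `R`-linear map between free left `R`-modules determined by a matrix of
coefficients. -/
def liftMap {α β : Type} [Fintype α] (w : α → β → R) :
    (α → R) →ₗ[R] (β → R) where
  toFun v b := ∑ a, v a * w a b
  map_add' u v := by
    funext b
    simp [add_mul, Finset.sum_add_distrib]
  map_smul' r v := by
    funext b
    simp [Finset.mul_sum, mul_assoc]

/-- The differential `∂` of the original complex `C`. -/
def Dmap (i : ℕ) : (X (i + 1) → R) →ₗ[R] (X i → R) :=
  liftMap (fun c c' => d i c c')

/-- The Morse differential `∂^M (c) = ∑ Γ(c,c') • c'` on the critical cells. -/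
def DMmap (i : ℕ) : (Crit X M (i + 1) → R) →ₗ[R] (Crit X M i → R) :=
  liftMap (fun c c' => Gamma X d M ⟨i + 1, c.1⟩ ⟨i, c'.1⟩)

/-- The comparison map `f : C → C^M`, `f(c) = ∑ Γ(c,c') • c'`. -/
def fmap (i : ℕ) : (X i → R) →ₗ[R] (Crit X M i → R) :=
  liftMap (fun c c' => Gamma X d M ⟨i, c⟩ ⟨i, c'.1⟩)

/-- The comparison map `g : C^M → C`, `g(c) = ∑ Γ(c,c') • c'`. -/
def gmap (i : ℕ) : (Crit X M i → R) →ₗ[R] (X i → R) :=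
  liftMap (fun c c' => Gamma X d M ⟨i, c.1⟩ ⟨i, c'⟩)

/-- The homotopy `χ : C_i → C_{i+1}`, `χ(c) = ∑ Γ(c,c') • c'`. -/
def chimap (i : ℕ) : (X i → R) →ₗ[R] (X (i + 1) → R) :=
  liftMap (fun c c' => Gamma X d M ⟨i, c⟩ ⟨i + 1, c'⟩)

set_option linter.unusedSectionVars false
set_option linter.style.haveILetI false

/-- Unmatched part of the differential. -/
def mN (i : ℕ) : Matrix (X (i + 1)) (X i) R :=
  Matrix.of fun c c' => if (c, c') ∈ M i then 0 else d i c c'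

/-- Matched part of the differential. -/
def mU (i : ℕ) : Matrix (X (i + 1)) (X i) R :=
  Matrix.of fun c c' => if (c, c') ∈ M i then d i c c' else 0

/-- Inverse of the matched part. -/
def mW (i : ℕ) : Matrix (X i) (X (i + 1)) R :=
  Matrix.of fun c' c => if (c, c') ∈ M i then Ring.inverse (d i c c') else 0

/-- The differential as a matrix. -/
def mD (i : ℕ) : Matrix (X (i + 1)) (X i) R := Matrix.of fun c c' => d i c c'

/-- Path sums as a matrix. -/
def mG (i j : ℕ) : Matrix (X i) (X j) R := Matrix.of fun c c' => Gamma X d M ⟨i, c⟩ ⟨j, c'⟩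

/-- Graded identity matrix. -/
def mE (i j : ℕ) : Matrix (X i) (X j) R :=
  Matrix.of fun c c' => if (⟨i, c⟩ : Σ i, X i) = ⟨j, c'⟩ then 1 else 0

/-- Projection to critical cells. -/
def mP (i : ℕ) : Matrix (X i) (X i) R :=
  Matrix.diagonal fun c => if CriticalV X M ⟨i, c⟩ then 1 else 0

/-- Homotopy as a matrix. -/
def mX (i : ℕ) : Matrix (X i) (X (i + 1)) R := mG X d M i (i + 1)

theorem mD_eq (i : ℕ) : mD X d i = mN X d M i + mU X d M i := by
  ext a b
  simp only [mD, mN, mU, Matrix.of_apply, Matrix.add_apply]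
  split_ifs <;> simp

/-- Vertices reachable from degree at most `n`. -/
def ReachInv (n : ℕ) (v : Σ i, X i) : Prop :=
  v.1 ≤ n ∨ (v.1 = n + 1 ∧ ∃ (a : X (n + 1)) (b : X n), (a, b) ∈ M n ∧ v = ⟨n + 1, a⟩)

variable {X d M}

theorem ReachInv.step (hM : IsAcyclicMatching X d M) {n : ℕ} {v w : Σ i, X i}
    (hv : ReachInv X M n v) (h : MStep X d M v w) : ReachInv X M n w := by
  cases h with
  | down i c c' hne hnm =>
    left
    rcases hv with h | h
    · simp at h ⊢; omega
    · have := h.1; simp at this ⊢; omega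
  | up i c c' hmem =>
    rcases hv with h | ⟨h1, a, b, hab, h2⟩
    · simp only at h
      rcases Nat.lt_or_ge i n with h3 | h3
      · left; simp only; omega
      · obtain rfl : i = n := by omega
        right
        exact ⟨rfl, c, c', hmem, rfl⟩
    · exfalso
      simp only at h1
      subst h1
      simp only [Sigma.mk.injEq, heq_eq_eq, true_and] at h2
      subst h2
      exact hM.2.2.2.1 _ _ _ _ hmem hab

instance finInv (n : ℕ) : Finite {v : Σ i, X i // ReachInv X M n v} := by
  let f : {v : Σ i, X i // ReachInv X M n v} → Σ i : Fin (n + 2), X i := fun v =>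
    ⟨⟨v.1.1, by rcases v.2 with h | h <;> [skip; have h := h.1] <;> omega⟩, v.1.2⟩
  apply Finite.of_injective f
  rintro ⟨⟨i, c⟩, hi⟩ ⟨⟨j, c'⟩, hj⟩ h
  simp only [f, Sigma.mk.injEq, Fin.mk.injEq] at h
  obtain ⟨rfl, h⟩ := h
  simpa using h

theorem acc_step (hM : IsAcyclicMatching X d M) (v : Σ i, X i) :
    Acc (fun y x => MStep X d M x y) v := by
  let n := v.1
  let r : {v : Σ i, X i // ReachInv X M n v} → {v : Σ i, X i // ReachInv X M n v} → Prop :=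
    fun y x => Relation.TransGen (MStep X d M) x.1 y.1
  have : IsTrans _ r := ⟨fun a b c h1 h2 => Relation.TransGen.trans h2 h1⟩
  have : Std.Irrefl r := ⟨fun a h => hM.2.2.2.2.2 _ h⟩
  have wf : WellFounded r := Finite.wellFounded_of_trans_of_irrefl r
  have key : ∀ x : {v : Σ i, X i // ReachInv X M n v}, Acc (fun y x => MStep X d M x y) x.1 := by
    intro x
    induction x using wf.induction with
    | _ x ih =>
      constructor
      intro y hy
      exact ih ⟨y, x.2.step hM hy⟩ (Relation.TransGen.single hy)
  exact key ⟨v, Or.inl le_rfl⟩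

theorem ReachInv.path (hM : IsAcyclicMatching X d M) {n : ℕ} {v w : Σ i, X i}
    (p : MPath X d M v w) : ReachInv X M n v → ReachInv X M n w := by
  induction p with
  | nil v => exact id
  | down i c c' hne hnm w p ih => exact fun h => ih (h.step hM (.down i c c' hne hnm))
  | up i c c' hmem w p ih => exact fun h => ih (h.step hM (.up i c c' hmem))

theorem mG_zero (hM : IsAcyclicMatching X d M) {i j : ℕ} (h : i + 2 ≤ j) : mG X d M i j = 0 := by
  ext c c'
  have : IsEmpty (MPath X d M ⟨i, c⟩ ⟨j, c'⟩) := by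
    constructor
    intro p
    have := ReachInv.path hM (n := i) p (Or.inl le_rfl)
    rcases this with h | h
    · simp only at h; omega
    · have := h.1; simp only at this; omega
  exact finsum_of_isEmpty _

/-- First step decomposition in degree zero. -/
def pathEquivZero (c : X 0) (w : Σ i, X i) : MPath X d M ⟨0, c⟩ w ≃
    PLift ((⟨0, c⟩ : Σ i, X i) = w) ⊕
      (Σ a : {a : X 1 // (a, c) ∈ M 0}, MPath X d M ⟨1, a.1⟩ w) where
  toFun p := match p with
    | .nil _ => .inl ⟨rfl⟩
    | .up _ a _ h _ p => .inr ⟨⟨a, h⟩, p⟩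
  invFun s := match s with
    | .inl ⟨h⟩ => h ▸ .nil _
    | .inr ⟨⟨a, h⟩, p⟩ => .up 0 a c h w p
  left_inv p := by cases p <;> rfl
  right_inv s := by
    rcases s with ⟨⟨rfl⟩⟩ | ⟨⟨a, h⟩, p⟩ <;> rfl

/-- First step decomposition in positive degree. -/
def pathEquivSucc (i : ℕ) (c : X (i + 1)) (w : Σ i, X i) : MPath X d M ⟨i + 1, c⟩ w ≃
    PLift ((⟨i + 1, c⟩ : Σ i, X i) = w) ⊕
      ((Σ b : {b : X i // d i c b ≠ 0 ∧ (c, b) ∉ M i}, MPath X d M ⟨i, b.1⟩ w) ⊕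
      (Σ a : {a : X (i + 2) // (a, c) ∈ M (i + 1)}, MPath X d M ⟨i + 2, a.1⟩ w)) where
  toFun p := match p with
    | .nil _ => .inl ⟨rfl⟩
    | .down _ _ b h1 h2 _ p => .inr (.inl ⟨⟨b, h1, h2⟩, p⟩)
    | .up _ a _ h _ p => .inr (.inr ⟨⟨a, h⟩, p⟩)
  invFun s := match s with
    | .inl ⟨h⟩ => h ▸ .nil _
    | .inr (.inl ⟨⟨b, h1, h2⟩, p⟩) => .down i c b h1 h2 w p
    | .inr (.inr ⟨⟨a, h⟩, p⟩) => .up (i + 1) a c h w p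
  left_inv p := by cases p <;> rfl
  right_inv s := by
    rcases s with ⟨⟨rfl⟩⟩ | ⟨⟨b, h1, h2⟩, p⟩ | ⟨⟨a, h⟩, p⟩ <;> rfl

theorem finite_path (hM : IsAcyclicMatching X d M) (v w : Σ i, X i) :
    Finite (MPath X d M v w) := by
  induction acc_step hM v with
  | intro v _ ih =>
    rcases v with ⟨i, c⟩
    cases i with
    | zero =>
      have : ∀ a : {a : X 1 // (a, c) ∈ M 0}, Finite (MPath X d M ⟨1, a.1⟩ w) :=
        fun a => ih _ (.up 0 a.1 c a.2)
      exact Finite.of_equiv _ (pathEquivZero c w).symm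
    | succ i =>
      have : ∀ a : {a : X (i + 2) // (a, c) ∈ M (i + 1)}, Finite (MPath X d M ⟨i + 2, a.1⟩ w) :=
        fun a => ih _ (.up (i + 1) a.1 c a.2)
      have : ∀ b : {b : X i // d i c b ≠ 0 ∧ (c, b) ∉ M i}, Finite (MPath X d M ⟨i, b.1⟩ w) :=
        fun b => ih _ (.down i c b.1 b.2.1 b.2.2)
      exact Finite.of_equiv _ (pathEquivSucc i c w).symm

theorem sum_plift (p : Prop) [Decidable p] [Fintype (PLift p)] (f : PLift p → R)
    (hf : ∀ x, f x = 1) : ∑ x : PLift p, f x = if p then 1 else 0 := by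
  by_cases h : p
  · have : ∀ x : PLift p, x = ⟨h⟩ := fun _ => rfl
    rw [Fintype.sum_eq_single (⟨h⟩ : PLift p) (fun x hx => absurd (this x) hx), hf, if_pos h]
  · have : IsEmpty (PLift p) := ⟨fun x => h x.down⟩
    simp [h]

theorem sum_sub {α : Type} [Fintype α] (p : α → Prop) [DecidablePred p] (f : α → R) (g : α → R)
    (h1 : ∀ a, p a → f a = g a) (h2 : ∀ a, ¬ p a → g a = 0) :
    ∑ a : {a // p a}, f a.1 = ∑ a, g a := by
  rw [← Finset.sum_subtype (Finset.univ.filter p) (by simp) f, Finset.sum_filter]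
  refine Finset.sum_congr rfl fun a _ => ?_
  split_ifs with h
  · exact h1 a h
  · exact (h2 a h).symm

theorem mG_first_zero (hM : IsAcyclicMatching X d M) (j : ℕ) :
    mG X d M 0 j = mE (R := R) X 0 j - mW X d M 0 * mG X d M 1 j := by
  have := finite_path hM
  have := fun v w => Fintype.ofFinite (MPath X d M v w)
  ext c w
  simp only [mG, mE, mW, Matrix.sub_apply, Matrix.mul_apply, Matrix.of_apply, Gamma,
    finsum_eq_sum_of_fintype]
  rw [← (pathEquivZero c _).symm.sum_comp, Fintype.sum_sum_type, Fintype.sum_sigma,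
    sub_eq_add_neg, ← Finset.sum_neg_distrib]
  congr 1
  · apply sum_plift
    rintro ⟨h⟩
    cases h
    rfl
  · rw [← sum_sub (fun a => (a, c) ∈ M 0) (fun a => - Ring.inverse (d 0 a c) *
      ∑ p : MPath X d M ⟨1, a⟩ ⟨j, w⟩, MPath.weight X d M p)]
    · simp only [Finset.mul_sum]
      rfl
    · intro a h; simp [h]
    · intro a h; simp [h]

theorem mG_first_succ (hM : IsAcyclicMatching X d M) (i j : ℕ) :
    mG X d M (i + 1) j = mE (R := R) X (i + 1) j + mN X d M i * mG X d M i j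
      - mW X d M (i + 1) * mG X d M (i + 2) j := by
  have := finite_path hM
  have := fun v w => Fintype.ofFinite (MPath X d M v w)
  ext c w
  simp only [mG, mE, mW, mN, Matrix.sub_apply, Matrix.add_apply, Matrix.mul_apply,
    Matrix.of_apply, Gamma, finsum_eq_sum_of_fintype]
  rw [← (pathEquivSucc i c _).symm.sum_comp, Fintype.sum_sum_type, Fintype.sum_sum_type,
    Fintype.sum_sigma, Fintype.sum_sigma,
    sub_eq_add_neg, ← Finset.sum_neg_distrib]
  refine Eq.trans ?_ (add_assoc _ _ _).symm
  congr 1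
  · apply sum_plift
    rintro ⟨h⟩
    cases h
    rfl
  congr 1
  · rw [← sum_sub (fun b => d i c b ≠ 0 ∧ (c, b) ∉ M i) (fun b => d i c b *
      ∑ p : MPath X d M ⟨i, b⟩ ⟨j, w⟩, MPath.weight X d M p)]
    · simp only [Finset.mul_sum]
      refine Finset.sum_congr rfl ?_
      rintro ⟨b, h1, h2⟩ _
      rfl
    · intro a h; simp [h.2]
    · intro a h
      by_cases h' : (c, a) ∈ M i
      · simp [h']
      · have : d i c a = 0 := by tauto
        simp [this]
  · rw [← sum_sub (fun a => (a, c) ∈ M (i + 1)) (fun a => - Ring.inverse (d (i + 1) a c) *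
      ∑ p : MPath X d M ⟨i + 2, a⟩ ⟨j, w⟩, MPath.weight X d M p)]
    · simp only [Finset.mul_sum]
      rfl
    · intro a h; simp [h]
    · intro a h; simp [h]

theorem mE_self (i : ℕ) : mE (R := R) X i i = 1 := by
  ext a b
  simp [mE, Matrix.one_apply]

theorem mE_ne {i j : ℕ} (h : i ≠ j) : mE (R := R) X i j = 0 := by
  ext a b
  simp [mE, h]

theorem mE_N (i j : ℕ) :
    mE (R := R) X (i + 1) (j + 1) * mN X d M j = mN X d M i * mE (R := R) X i j := by
  by_cases h : i = j
  · subst h; simp [mE_self]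
  · rw [mE_ne h, mE_ne (by omega)]; simp

theorem mE_W (i j : ℕ) :
    mE (R := R) X i j * mW X d M j = mW X d M i * mE (R := R) X (i + 1) (j + 1) := by
  by_cases h : i = j
  · subst h; simp [mE_self]
  · rw [mE_ne h, mE_ne (by omega)]; simp

theorem first_unique (hM : IsAcyclicMatching X d M) (j : ℕ)
    (A B : ∀ i, Matrix (X i) (X j) R)
    (hA0 : A 0 = mE (R := R) X 0 j - mW X d M 0 * A 1)
    (hA : ∀ i, A (i + 1) = mE (R := R) X (i + 1) j + mN X d M i * A i - mW X d M (i + 1) * A (i + 2))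
    (hB0 : B 0 = mE (R := R) X 0 j - mW X d M 0 * B 1)
    (hB : ∀ i, B (i + 1) = mE (R := R) X (i + 1) j + mN X d M i * B i - mW X d M (i + 1) * B (i + 2))
    (i : ℕ) : A i = B i := by
  have key : ∀ v : Σ i, X i, ∀ w, A v.1 v.2 w = B v.1 v.2 w := by
    intro v
    induction acc_step hM v with
    | intro v _ ih =>
      intro w
      rcases v with ⟨i, c⟩
      have hW : (mW X d M i * A (i + 1)) c w = (mW X d M i * B (i + 1)) c w := by
        simp only [Matrix.mul_apply]
        refine Finset.sum_congr rfl fun a _ => ?_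
        by_cases h : (a, c) ∈ M i
        · rw [ih ⟨i + 1, a⟩ (.up i a c h) w]
        · simp [mW, h]
      cases i with
      | zero =>
        simp only
        rw [hA0, hB0, Matrix.sub_apply, Matrix.sub_apply, hW]
      | succ i =>
        simp only
        rw [hA, hB, Matrix.sub_apply, Matrix.sub_apply, hW, Matrix.add_apply, Matrix.add_apply]
        congr 2
        simp only [Matrix.mul_apply]
        refine Finset.sum_congr rfl fun b _ => ?_
        by_cases h : (c, b) ∈ M i
        · simp [mN, h]
        · by_cases h' : d i c b = 0
          · simp [mN, h']
          · rw [ih ⟨i, b⟩ (.down i c b h' h) w]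
  ext c w
  exact key ⟨i, c⟩ w

theorem mG_last_zero (hM : IsAcyclicMatching X d M) (i : ℕ) :
    mG X d M i 0 = mE (R := R) X i 0 + mG X d M i 1 * mN X d M 0 := by
  refine first_unique hM 0 (fun i => mG X d M i 0)
    (fun i => mE (R := R) X i 0 + mG X d M i 1 * mN X d M 0)
    (mG_first_zero hM 0) (fun i => mG_first_succ hM i 0) ?_ ?_ i
  · rw [mG_first_zero hM 1, mE_ne (show 0 ≠ 1 by omega), mE_ne (show 1 ≠ 0 by omega)]
    simp [Matrix.mul_assoc, sub_eq_add_neg]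
  · intro i
    rw [mG_first_succ hM i 1, mE_ne (show i + 2 ≠ 0 by omega)]
    simp only [Matrix.add_mul, Matrix.sub_mul, Matrix.mul_add, mE_N, Matrix.mul_assoc,
      Matrix.mul_zero]
    abel

theorem mG_last_succ (hM : IsAcyclicMatching X d M) (i j : ℕ) :
    mG X d M i (j + 1) = mE (R := R) X i (j + 1) + mG X d M i (j + 2) * mN X d M (j + 1)
      - mG X d M i j * mW X d M j := by
  refine first_unique hM (j + 1) (fun i => mG X d M i (j + 1))
    (fun i => mE (R := R) X i (j + 1) + mG X d M i (j + 2) * mN X d M (j + 1)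
      - mG X d M i j * mW X d M j)
    (mG_first_zero hM _) (fun i => mG_first_succ hM i _) ?_ ?_ i
  · rw [mG_first_zero hM (j + 2), mG_first_zero hM j, mE_ne (show 0 ≠ j + 2 by omega),
      mE_ne (show 0 ≠ j + 1 by omega)]
    simp only [Matrix.add_mul, Matrix.sub_mul, Matrix.mul_add, Matrix.mul_sub, mE_W,
      Matrix.mul_assoc, Matrix.zero_mul]
    abel
  · intro i
    rw [mG_first_succ hM i (j + 2), mG_first_succ hM i j]
    simp only [Matrix.add_mul, Matrix.sub_mul, Matrix.mul_add, Matrix.mul_sub, mE_W, mE_N,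
      Matrix.mul_assoc]
    abel

theorem UW_eq (hM : IsAcyclicMatching X d M) (i : ℕ) : mU X d M i * mW X d M i =
    Matrix.diagonal fun a => if ∃ b, (a, b) ∈ M i then 1 else 0 := by
  ext a a'
  simp only [Matrix.mul_apply, mU, mW, Matrix.of_apply]
  by_cases h : ∃ b, (a, b) ∈ M i
  · obtain ⟨b, hb⟩ := h
    rw [Fintype.sum_eq_single b]
    · by_cases haa : a = a'
      · subst haa
        rw [Matrix.diagonal_apply_eq, if_pos hb, if_pos hb, if_pos ⟨b, hb⟩]
        exact Ring.mul_inverse_cancel _ (hM.2.2.2.2.1 i a b hb).2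
      · rw [Matrix.diagonal_apply_ne _ haa,
          if_neg (fun h => haa (hM.2.2.1 i a a' b hb h)), mul_zero]
    · intro b' hb'
      rw [if_neg (fun h => hb' (hM.2.1 i a b' b h hb)), zero_mul]
  · rw [Finset.sum_eq_zero]
    · by_cases haa : a = a'
      · subst haa
        rw [Matrix.diagonal_apply_eq, if_neg h]
      · rw [Matrix.diagonal_apply_ne _ haa]
    · intro b _
      rw [if_neg (fun hb => h ⟨b, hb⟩), zero_mul]

theorem WU_eq (hM : IsAcyclicMatching X d M) (i : ℕ) : mW X d M i * mU X d M i =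
    Matrix.diagonal fun b => if ∃ a, (a, b) ∈ M i then 1 else 0 := by
  ext b b'
  simp only [Matrix.mul_apply, mU, mW, Matrix.of_apply]
  by_cases h : ∃ a, (a, b) ∈ M i
  · obtain ⟨a, ha⟩ := h
    rw [Fintype.sum_eq_single a]
    · by_cases hbb : b = b'
      · subst hbb
        rw [Matrix.diagonal_apply_eq, if_pos ha, if_pos ha, if_pos ⟨a, ha⟩]
        exact Ring.inverse_mul_cancel _ (hM.2.2.2.2.1 i a b ha).2
      · rw [Matrix.diagonal_apply_ne _ hbb,
          if_neg (fun h => hbb (hM.2.1 i a b b' ha h)), mul_zero]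
    · intro a' ha'
      rw [if_neg (fun h => ha' (hM.2.2.1 i a' a b h ha)), zero_mul]
  · rw [Finset.sum_eq_zero]
    · by_cases hbb : b = b'
      · subst hbb
        rw [Matrix.diagonal_apply_eq, if_neg h]
      · rw [Matrix.diagonal_apply_ne _ hbb]
    · intro a _
      rw [if_neg (fun ha => h ⟨a, ha⟩), zero_mul]

theorem WUW (hM : IsAcyclicMatching X d M) (i : ℕ) :
    mW X d M i * (mU X d M i * mW X d M i) = mW X d M i := by
  rw [UW_eq hM]
  ext b a
  rw [Matrix.mul_diagonal]
  simp only [mW, Matrix.of_apply]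
  by_cases h : (a, b) ∈ M i
  · rw [if_pos h, if_pos ⟨b, h⟩, mul_one]
  · rw [if_neg h, zero_mul]

theorem WW (hM : IsAcyclicMatching X d M) (i : ℕ) :
    mW X d M i * mW X d M (i + 1) = 0 := by
  ext b a
  simp only [Matrix.mul_apply, mW, Matrix.of_apply, Matrix.zero_apply]
  refine Finset.sum_eq_zero fun c _ => ?_
  by_cases h : (c, b) ∈ M i
  · rw [if_neg (fun h' => hM.2.2.2.1 i a c b h' h), mul_zero]
  · rw [if_neg h, zero_mul]

theorem PW (i : ℕ) : mP (R := R) X M i * mW X d M i = 0 := by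
  ext b a
  simp only [mP, Matrix.diagonal_mul, mW, Matrix.of_apply, Matrix.zero_apply]
  by_cases h : (a, b) ∈ M i
  · rw [if_neg (fun h' => (h' i a b h).2 rfl), zero_mul]
  · rw [if_neg h, mul_zero]

theorem WP (i : ℕ) : mW X d M i * mP (R := R) X M (i + 1) = 0 := by
  ext b a
  simp only [mP, Matrix.mul_diagonal, mW, Matrix.of_apply, Matrix.zero_apply]
  by_cases h : (a, b) ∈ M i
  · rw [if_pos h, if_neg (fun h' => (h' i a b h).1 rfl), mul_zero]
  · rw [if_neg h, zero_mul]

theorem UP (i : ℕ) : mU X d M i * mP (R := R) X M i = 0 := by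
  ext a b
  simp only [mP, Matrix.mul_diagonal, mU, Matrix.of_apply, Matrix.zero_apply]
  by_cases h : (a, b) ∈ M i
  · rw [if_pos h, if_neg (fun h' => (h' i a b h).2 rfl), mul_zero]
  · rw [if_neg h, zero_mul]

theorem PU (i : ℕ) : mP (R := R) X M (i + 1) * mU X d M i = 0 := by
  ext a b
  simp only [mP, Matrix.diagonal_mul, mU, Matrix.of_apply, Matrix.zero_apply]
  by_cases h : (a, b) ∈ M i
  · rw [if_neg (fun h' => (h' i a b h).1 rfl), zero_mul]
  · rw [if_neg h, mul_zero]

theorem crit_iff_zero (b : X 0) : CriticalV X M ⟨0, b⟩ ↔ ¬ ∃ a, (a, b) ∈ M 0 := by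
  constructor
  · rintro h ⟨a, ha⟩
    exact (h 0 a b ha).2 rfl
  · intro h j a b' hab
    refine ⟨by simp, fun h' => ?_⟩
    cases h'
    exact h ⟨a, hab⟩

theorem crit_iff_succ (i : ℕ) (c : X (i + 1)) : CriticalV X M ⟨i + 1, c⟩ ↔
    (¬ ∃ a, (a, c) ∈ M (i + 1)) ∧ ¬ ∃ b, (c, b) ∈ M i := by
  constructor
  · refine fun h => ⟨?_, ?_⟩
    · rintro ⟨a, ha⟩
      exact (h _ a c ha).2 rfl
    · rintro ⟨b, hb⟩
      exact (h _ c b hb).1 rfl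
  · rintro ⟨h1, h2⟩ j a b hab
    refine ⟨fun h' => ?_, fun h' => ?_⟩
    · cases h'
      exact h2 ⟨b, hab⟩
    · cases h'
      exact h1 ⟨a, hab⟩

theorem P_zero (hM : IsAcyclicMatching X d M) :
    mP (R := R) X M 0 = 1 - mW X d M 0 * mU X d M 0 := by
  rw [WU_eq hM, ← Matrix.diagonal_one, Matrix.diagonal_sub, mP]
  congr 1
  funext b
  by_cases h : ∃ a, (a, b) ∈ M 0
  · rw [if_neg (by rw [crit_iff_zero]; exact not_not.2 h), if_pos h, sub_self]
  · rw [if_pos (by rw [crit_iff_zero]; exact h), if_neg h, sub_zero]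

theorem P_succ (hM : IsAcyclicMatching X d M) (i : ℕ) :
    mP (R := R) X M (i + 1) = 1 - mW X d M (i + 1) * mU X d M (i + 1) - mU X d M i * mW X d M i := by
  rw [WU_eq hM, UW_eq hM, ← Matrix.diagonal_one, Matrix.diagonal_sub, Matrix.diagonal_sub, mP]
  congr 1
  funext b
  by_cases h : ∃ a, (a, b) ∈ M (i + 1)
  · by_cases h' : ∃ c, (b, c) ∈ M i
    · obtain ⟨a, h⟩ := h
      obtain ⟨c, h'⟩ := h'
      exact (hM.2.2.2.1 _ _ _ _ h h').elim
    · rw [if_neg (by rw [crit_iff_succ]; tauto), if_pos h, if_neg h', sub_self, sub_zero]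
  · by_cases h' : ∃ c, (b, c) ∈ M i
    · rw [if_neg (by rw [crit_iff_succ]; tauto), if_pos h', if_neg h, sub_zero, sub_self]
    · rw [if_pos (by rw [crit_iff_succ]; tauto), if_neg h', if_neg h, sub_zero, sub_zero]

theorem crit_sum {α β : Type} (i : ℕ) (A : Matrix α (X i) R) (B : Matrix (X i) β R)
    (a : α) (b : β) :
    ∑ k : Crit X M i, A a k.1 * B k.1 b = (A * mP (R := R) X M i * B) a b := by
  rw [sum_sub (fun k => CriticalV X M ⟨i, k⟩) (fun k => A a k * B k b)
    (fun k => (A * mP (R := R) X M i) a k * B k b), Matrix.mul_apply]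
  · intro k hk
    rw [mP, Matrix.mul_diagonal, if_pos hk, mul_one]
  · intro k hk
    rw [mP, Matrix.mul_diagonal, if_neg hk, mul_zero, zero_mul]

theorem PP (i : ℕ) : mP (R := R) X M i * mP (R := R) X M i = mP (R := R) X M i := by
  rw [mP, Matrix.diagonal_mul_diagonal]
  congr 1
  funext c
  split_ifs <;> simp

theorem X_eq_WG (hM : IsAcyclicMatching X d M) (i : ℕ) :
    mX X d M i = -(mW X d M i * mG X d M (i + 1) (i + 1)) := by
  rw [mX]
  cases i with
  | zero => rw [mG_first_zero hM, mE_ne (by omega), zero_sub]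
  | succ i =>
    rw [mG_first_succ hM, mE_ne (by omega), mG_zero hM (show i + 2 ≤ i + 1 + 1 by omega),
      Matrix.mul_zero, zero_add, zero_sub]

theorem X_eq_GW (hM : IsAcyclicMatching X d M) (i : ℕ) :
    mX X d M i = -(mG X d M i i * mW X d M i) := by
  rw [mX, mG_last_succ hM, mE_ne (by omega), mG_zero hM (show i + 2 ≤ i + 2 by omega),
      Matrix.zero_mul, zero_add, zero_sub]

theorem WUX (hM : IsAcyclicMatching X d M) (i : ℕ) :
    mW X d M i * (mU X d M i * mX X d M i) = mX X d M i := by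
  rw [X_eq_WG hM, Matrix.mul_neg, Matrix.mul_neg, ← Matrix.mul_assoc (mU X d M i),
    ← Matrix.mul_assoc (mW X d M i), WUW hM]

theorem XUW (hM : IsAcyclicMatching X d M) (i : ℕ) :
    mX X d M i * (mU X d M i * mW X d M i) = mX X d M i := by
  rw [X_eq_GW hM, Matrix.neg_mul, Matrix.mul_assoc, WUW hM]

theorem WDX (hM : IsAcyclicMatching X d M) (i : ℕ) :
    mW X d M i * (mD X d i * mX X d M i) = -mW X d M i := by
  have h1 := X_eq_WG hM i
  rw [mG_first_succ hM i (i + 1), mE_self, Matrix.mul_sub, Matrix.mul_add, Matrix.mul_one,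
    ← Matrix.mul_assoc (mW X d M i) (mW X d M (i + 1)), WW hM, Matrix.zero_mul, sub_zero] at h1
  change _ = -(mW X d M i + mW X d M i * (mN X d M i * mX X d M i)) at h1
  rw [mD_eq X d M, Matrix.add_mul, Matrix.mul_add, WUX hM]
  nth_rewrite 2 [h1]
  abel

theorem XDW (hM : IsAcyclicMatching X d M) (i : ℕ) :
    mX X d M i * (mD X d i * mW X d M i) = -mW X d M i := by
  have h0 : mG X d M i i * mW X d M i =
      mW X d M i + mX X d M i * (mN X d M i * mW X d M i) := by
    cases i with
    | zero =>
      rw [mG_last_zero hM 0, mE_self, Matrix.add_mul, Matrix.one_mul, Matrix.mul_assoc]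
      rfl
    | succ i =>
      rw [mG_last_succ hM (i + 1) i, mE_self, Matrix.sub_mul, Matrix.add_mul, Matrix.one_mul,
        Matrix.mul_assoc, Matrix.mul_assoc, WW hM, Matrix.mul_zero, sub_zero]
      rfl
  have h1 := X_eq_GW hM i
  rw [h0] at h1
  rw [mD_eq X d M, Matrix.add_mul, Matrix.mul_add, XUW hM]
  nth_rewrite 2 [h1]
  abel

theorem XX (hM : IsAcyclicMatching X d M) (i : ℕ) :
    mX X d M i * mX X d M (i + 1) = 0 := by
  rw [X_eq_GW hM i, X_eq_WG hM (i + 1), Matrix.neg_mul, Matrix.mul_neg, Matrix.mul_assoc,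
    ← Matrix.mul_assoc (mW X d M i), WW hM, Matrix.zero_mul, Matrix.mul_zero, neg_zero, neg_zero]

theorem PX (hM : IsAcyclicMatching X d M) (i : ℕ) :
    mP (R := R) X M i * mX X d M i = 0 := by
  rw [X_eq_WG hM i, Matrix.mul_neg, ← Matrix.mul_assoc, PW, Matrix.zero_mul, neg_zero]

theorem XP (hM : IsAcyclicMatching X d M) (i : ℕ) :
    mX X d M i * mP (R := R) X M (i + 1) = 0 := by
  rw [X_eq_GW hM i, Matrix.neg_mul, Matrix.mul_assoc, WP, Matrix.mul_zero, neg_zero]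

variable (X d M) in
/-- The matrix `1 + χ∂`. -/
def mF (i : ℕ) : Matrix (X i) (X i) R := 1 + mX X d M i * mD X d i

variable (X d M) in
/-- The matrix `1 + ∂χ`. -/
def mK : ∀ i : ℕ, Matrix (X i) (X i) R
  | 0 => 1
  | i + 1 => 1 + mD X d i * mX X d M i

theorem DD (hC : IsComplexAux X d) (i : ℕ) : mD X d (i + 1) * mD X d i = 0 := by
  ext a b
  rw [Matrix.mul_apply]
  exact hC i a b

theorem FW (hM : IsAcyclicMatching X d M) (i : ℕ) : mF X d M i * mW X d M i = 0 := by
  rw [mF, Matrix.add_mul, Matrix.one_mul, Matrix.mul_assoc, XDW hM, add_neg_cancel]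

theorem WK (hM : IsAcyclicMatching X d M) (i : ℕ) : mW X d M i * mK X d M (i + 1) = 0 := by
  rw [mK, Matrix.mul_add, Matrix.mul_one, WDX hM, add_neg_cancel]

theorem DF_eq (i : ℕ) : mD X d i * mF X d M i = mK X d M (i + 1) * mD X d i := by
  rw [mF, mK, Matrix.mul_add, Matrix.mul_one, Matrix.add_mul, Matrix.one_mul, Matrix.mul_assoc]

theorem FD (hC : IsComplexAux X d) (i : ℕ) : mF X d M (i + 1) * mD X d i = mD X d i := by
  rw [mF, Matrix.add_mul, Matrix.one_mul, Matrix.mul_assoc, DD hC, Matrix.mul_zero, add_zero]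

theorem FPDF (hC : IsComplexAux X d) (hM : IsAcyclicMatching X d M) (i : ℕ) :
    mF X d M (i + 1) * mP (R := R) X M (i + 1) * (mD X d i * mF X d M i) =
      mD X d i * mF X d M i := by
  rw [P_succ hM, Matrix.mul_sub, Matrix.mul_sub, Matrix.mul_one, Matrix.sub_mul, Matrix.sub_mul,
    ← Matrix.mul_assoc (mF X d M (i + 1)) (mW X d M (i + 1)), FW hM, Matrix.zero_mul,
    Matrix.zero_mul, sub_zero, ← Matrix.mul_assoc (mF X d M (i + 1)) (mD X d i), FD hC, DF_eq,
    Matrix.mul_assoc (mF X d M (i + 1)), Matrix.mul_assoc (mU X d M i),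
    ← Matrix.mul_assoc (mW X d M i), WK hM, Matrix.zero_mul, Matrix.mul_zero, Matrix.mul_zero,
    sub_zero]

theorem FPK (hM : IsAcyclicMatching X d M) (i : ℕ) :
    mF X d M i * mP (R := R) X M i * mK X d M i = mF X d M i * mK X d M i := by
  cases i with
  | zero =>
    rw [P_zero hM, Matrix.mul_sub, Matrix.mul_one, ← Matrix.mul_assoc (mF X d M 0), FW hM,
      Matrix.zero_mul, sub_zero]
  | succ i =>
    rw [P_succ hM, Matrix.mul_sub, Matrix.mul_sub, Matrix.mul_one,
      ← Matrix.mul_assoc (mF X d M (i + 1)) (mW X d M (i + 1)), FW hM, Matrix.zero_mul, sub_zero,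
      Matrix.sub_mul, Matrix.mul_assoc (mF X d M (i + 1)) (_ * _), Matrix.mul_assoc (mU X d M i),
      WK hM, Matrix.mul_zero, Matrix.mul_zero, sub_zero]

theorem FK_succ (hC : IsComplexAux X d) (i : ℕ) :
    mF X d M (i + 1) * mK X d M (i + 1) =
      1 + mX X d M (i + 1) * mD X d (i + 1) + mD X d i * mX X d M i := by
  rw [mK, Matrix.mul_add, ← Matrix.mul_assoc, FD hC, Matrix.mul_one, mF]

theorem DFPK (hC : IsComplexAux X d) (hM : IsAcyclicMatching X d M) (i : ℕ) :
    mD X d i * mF X d M i * mP (R := R) X M i * mK X d M i = mD X d i * mF X d M i := by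
  rw [Matrix.mul_assoc (mD X d i), Matrix.mul_assoc (mD X d i), FPK hM]
  cases i with
  | zero => rw [mK, Matrix.mul_one]
  | succ i =>
    rw [FK_succ hC, Matrix.mul_add, ← Matrix.mul_assoc _ (mD X d i), DD hC, Matrix.zero_mul,
      add_zero, mF]

theorem PKFP (hM : IsAcyclicMatching X d M) (i : ℕ) :
    mP (R := R) X M i * (mK X d M i * mF X d M i) * mP (R := R) X M i = mP (R := R) X M i := by
  cases i with
  | zero =>
    rw [mK, Matrix.one_mul, mF, Matrix.mul_add, Matrix.mul_one, ← Matrix.mul_assoc, PX hM,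
      Matrix.zero_mul, add_zero, PP]
  | succ i =>
    have h : mK X d M (i + 1) * mF X d M (i + 1) =
        1 + mX X d M (i + 1) * mD X d (i + 1) + mD X d i * mX X d M i := by
      rw [mK, mF, Matrix.add_mul, Matrix.mul_add, Matrix.one_mul, Matrix.one_mul, Matrix.mul_add,
        Matrix.mul_one, Matrix.mul_assoc (mD X d i), ← Matrix.mul_assoc (mX X d M i), XX hM,
        Matrix.zero_mul, Matrix.mul_zero, add_zero]
    rw [h, Matrix.mul_add, Matrix.mul_add, Matrix.mul_one,
      ← Matrix.mul_assoc _ (mX X d M (i + 1)), PX hM,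
      Matrix.zero_mul, add_zero, Matrix.add_mul, PP, Matrix.mul_assoc, Matrix.mul_assoc, XP hM,
      Matrix.mul_zero, Matrix.mul_zero, add_zero]

theorem mulP_apply {α : Type} (i : ℕ) (A : Matrix α (X i) R) (a : α) (k : Crit X M i) :
    (A * mP (R := R) X M i) a k.1 = A a k.1 := by
  rw [mP, Matrix.mul_diagonal, if_pos k.2, mul_one]

theorem Pmul_apply {α : Type} (i : ℕ) (A : Matrix (X i) α R) (k : Crit X M i) (a : α) :
    (mP (R := R) X M i * A) k.1 a = A k.1 a := by
  rw [mP, Matrix.diagonal_mul, if_pos k.2, one_mul]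

theorem GP (hM : IsAcyclicMatching X d M) (i : ℕ) :
    mG X d M i i * mP (R := R) X M i = mF X d M i * mP (R := R) X M i := by
  have h : mX X d M i * mN X d M i * mP (R := R) X M i =
      mX X d M i * mD X d i * mP (R := R) X M i := by
    rw [mD_eq X d M, Matrix.mul_assoc, Matrix.mul_assoc, Matrix.add_mul, UP, add_zero]
  rw [mF, Matrix.add_mul, ← h]
  cases i with
  | zero =>
    rw [mG_last_zero hM 0, mE_self, Matrix.add_mul]
    rfl
  | succ i =>
    rw [mG_last_succ hM (i + 1) i, mE_self, Matrix.sub_mul, Matrix.add_mul,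
      Matrix.mul_assoc _ (mW X d M i), WP, Matrix.mul_zero, sub_zero]
    rfl

theorem PG (hM : IsAcyclicMatching X d M) (i : ℕ) :
    mP (R := R) X M i * mG X d M i i = mP (R := R) X M i * mK X d M i := by
  cases i with
  | zero =>
    rw [mG_first_zero hM 0, mE_self, Matrix.mul_sub, ← Matrix.mul_assoc, PW, Matrix.zero_mul,
      sub_zero]
    rfl
  | succ i =>
    rw [mG_first_succ hM i (i + 1), mE_self, Matrix.mul_sub, ← Matrix.mul_assoc _ (mW X d M _),
      PW, Matrix.zero_mul, sub_zero, mK, mD_eq X d M, Matrix.add_mul, Matrix.mul_add,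
      Matrix.mul_add, Matrix.mul_add, ← Matrix.mul_assoc _ (mU X d M _), PU, Matrix.zero_mul,
      add_zero]
    rfl

theorem f_entry (hM : IsAcyclicMatching X d M) (i : ℕ) (c : X i) (k : Crit X M i) :
    Gamma X d M ⟨i, c⟩ ⟨i, k.1⟩ = mF X d M i c k.1 := by
  rw [← mulP_apply i (mF X d M i) c k, ← GP hM, mulP_apply]
  rfl

theorem g_entry (hM : IsAcyclicMatching X d M) (i : ℕ) (k : Crit X M i) (c : X i) :
    Gamma X d M ⟨i, k.1⟩ ⟨i, c⟩ = mK X d M i k.1 c := by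
  rw [← Pmul_apply i (mK X d M i) k c, ← PG hM, Pmul_apply]
  rfl

theorem D_entry (hM : IsAcyclicMatching X d M) (i : ℕ) (k : Crit X M (i + 1)) (l : Crit X M i) :
    Gamma X d M ⟨i + 1, k.1⟩ ⟨i, l.1⟩ = (mD X d i * mF X d M i) k.1 l.1 := by
  have h : mP (R := R) X M (i + 1) * mG X d M (i + 1) i =
      mP (R := R) X M (i + 1) * (mD X d i * mG X d M i i) := by
    rw [mG_first_succ hM i i, mE_ne (by omega), zero_add, Matrix.mul_sub,
      ← Matrix.mul_assoc _ (mW X d M _), PW, Matrix.zero_mul, sub_zero, mD_eq X d M,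
      Matrix.add_mul, Matrix.mul_add, ← Matrix.mul_assoc _ (mU X d M _), PU, Matrix.zero_mul,
      add_zero]
  rw [← mulP_apply i (mD X d i * mF X d M i) k.1 l, Matrix.mul_assoc, ← GP hM,
    ← Matrix.mul_assoc, mulP_apply,
    ← Pmul_apply (i + 1) (mD X d i * mG X d M i i) k l.1, ← h, Pmul_apply]
  rfl

theorem liftMap_comp {α β γ : Type} [Fintype α] [Fintype β] (w₁ : α → β → R) (w₂ : β → γ → R) :
    liftMap w₂ ∘ₗ liftMap w₁ = liftMap (fun a c => ∑ b, w₁ a b * w₂ b c) := by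
  refine LinearMap.ext fun v => ?_
  funext c
  simp only [liftMap, LinearMap.comp_apply, LinearMap.coe_mk, AddHom.coe_mk, Finset.sum_mul,
    Finset.mul_sum, mul_assoc]
  exact Finset.sum_comm

theorem liftMap_add {α β : Type} [Fintype α] (w₁ w₂ : α → β → R) :
    liftMap w₁ + liftMap w₂ = liftMap (fun a b => w₁ a b + w₂ a b) := by
  refine LinearMap.ext fun v => ?_
  funext c
  simp [liftMap, mul_add, Finset.sum_add_distrib]

theorem liftMap_one {α : Type} [Fintype α] [DecidableEq α] :
    (LinearMap.id : (α → R) →ₗ[R] (α → R)) = liftMap (fun a b => (1 : Matrix α α R) a b) := by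
  refine LinearMap.ext fun v => ?_
  funext c
  simp [liftMap, Matrix.one_apply]


variable (X d M)

/-- Theorem 2.2, Algebraic Discrete Morse theory.
If `M` is an acyclic matching on the graph `G(C)` of the chain complex `C`, then the
Morse complex `C^M` is a chain complex of free `R`-modules (`∂^M ∘ ∂^M = 0`) which is
chain homotopy equivalent to `C`: the maps `f` and `g` are chain maps, `f ∘ g` is the
identity of `C^M` and `g ∘ f` is homotopic to the identity of `C` via the homotopy `χ`.
In particular `H_i(C) ≅ H_i(C^M)` for all `i ≥ 0`. -/
theorem algebraic_discrete_morse_theory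
    (hC : IsComplexAux X d) (hM : IsAcyclicMatching X d M) :
    (∀ i, Module.Free R (Crit X M i → R)) ∧
    (∀ i, DMmap X d M i ∘ₗ DMmap X d M (i + 1) = 0) ∧
    (∀ i, DMmap X d M i ∘ₗ fmap X d M (i + 1) = fmap X d M i ∘ₗ Dmap X d i) ∧
    (∀ i, Dmap X d i ∘ₗ gmap X d M (i + 1) = gmap X d M i ∘ₗ DMmap X d M i) ∧
    (∀ i, fmap X d M i ∘ₗ gmap X d M i = LinearMap.id) ∧
    (gmap X d M 0 ∘ₗ fmap X d M 0 - LinearMap.id = Dmap X d 0 ∘ₗ chimap X d M 0) ∧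
    (∀ i, gmap X d M (i + 1) ∘ₗ fmap X d M (i + 1) - LinearMap.id =
        Dmap X d (i + 1) ∘ₗ chimap X d M (i + 1) + chimap X d M i ∘ₗ Dmap X d i) := by
  refine ⟨fun i => inferInstance, fun i => ?_, fun i => ?_, fun i => ?_, fun i => ?_, ?_,
    fun i => ?_⟩
  · rw [DMmap, DMmap, liftMap_comp]
    have h : ∀ (a : Crit X M (i + 2)) (c : Crit X M i), ∑ b : Crit X M (i + 1),
        Gamma X d M ⟨i + 2, a.1⟩ ⟨i + 1, b.1⟩ * Gamma X d M ⟨i + 1, b.1⟩ ⟨i, c.1⟩ = 0 := by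
      intro a c
      simp only [D_entry hM]
      rw [crit_sum, Matrix.mul_assoc (mD X d (i + 1)), Matrix.mul_assoc (mD X d (i + 1)),
        FPDF hC hM, ← Matrix.mul_assoc, DD hC, Matrix.zero_mul, Matrix.zero_apply]
    simp only [h]
    refine LinearMap.ext fun v => ?_
    funext c
    simp [liftMap]
  · rw [DMmap, fmap, fmap, Dmap, liftMap_comp, liftMap_comp]
    congr 1
    funext c l
    simp only [D_entry hM, f_entry hM]
    rw [crit_sum, FPDF hC hM, Matrix.mul_apply]
    rfl
  · rw [DMmap, gmap, gmap, Dmap, liftMap_comp, liftMap_comp]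
    congr 1
    funext k c
    simp only [D_entry hM, g_entry hM]
    rw [crit_sum, DFPK hC hM, DF_eq, Matrix.mul_apply]
    rfl
  · rw [gmap, fmap, liftMap_comp, liftMap_one]
    congr 1
    funext k l
    simp only [f_entry hM, g_entry hM]
    rw [← Matrix.mul_apply, ← mulP_apply i (mK X d M i * mF X d M i) k.1 l,
      ← Pmul_apply i (mK X d M i * mF X d M i * mP (R := R) X M i) k l.1,
      ← Matrix.mul_assoc, PKFP hM, mP]
    by_cases h : k = l
    · subst h
      rw [Matrix.diagonal_apply_eq, Matrix.one_apply_eq, if_pos k.2]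
    · rw [Matrix.diagonal_apply_ne _ (fun h' => h (Subtype.ext h')), Matrix.one_apply_ne h]
  · rw [sub_eq_iff_eq_add, gmap, fmap, Dmap, chimap, liftMap_comp, liftMap_comp, liftMap_one,
      liftMap_add]
    congr 1
    funext a b
    simp only [f_entry hM, g_entry hM]
    rw [crit_sum, FPK hM, mK, Matrix.mul_one, mF, add_comm, Matrix.add_apply, Matrix.mul_apply]
    rfl
  · rw [sub_eq_iff_eq_add, gmap, fmap, Dmap, Dmap, chimap, chimap, liftMap_comp, liftMap_comp,
      liftMap_comp, liftMap_one, liftMap_add, liftMap_add]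
    congr 1
    funext a b
    simp only [f_entry hM, g_entry hM]
    rw [crit_sum, FPK hM, FK_succ hC, add_assoc, add_comm, Matrix.add_apply, Matrix.add_apply,
      Matrix.mul_apply, Matrix.mul_apply]
    rfl

end ADMT

end
end

section
/- Let M be an acyclic matching on the graph G(C•) of the chain complex C•. Then the Morse maps ∂^M square to zero: ∂_i^M ∘ ∂_{i+1}^M = 0 for all i ≥ 0, so (C_i^M, ∂_i^M) is a chain complex. -/
/-!
Algebraic Discrete Morse theory (Jöllenbeck–Welker).

Setup: `R` is a (possibly noncommutative) ring and `C` is a chain complex of free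
left `R`-modules `C i = X i → R` with fixed finite basis `X i` in homological
degree `i`; the differential is `∂ i (c) = ∑ c', d i c c' • c'` (we record only the
matrix of coefficients `d`).  `M` is a matching on the associated weighted directed
graph, `MStep` describes the edges of the modified graph `G_M`, `MPath` the directed
paths, `Gamma v w` the sum of the weights of all paths from `v` to `w`, `Crit` the
critical basis elements, `DMmap` the Morse differential, and `fmap`, `gmap`, `chimap`
the comparison maps and the homotopy.
-/

attribute [local instance] Classical.propDecidable

noncomputable section

section ADMT

variable {R : Type} [Ring R]
variable (X : ℕ → Type) [∀ i, Fintype (X i)]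
variable (d : ∀ i, X (i + 1) → X i → R)
variable (M : ∀ i, Set (X (i + 1) × X i))

section Helpers

theorem aux_nopath (hM : IsAcyclicMatching X d M) {v w : Σ i, X i}
    (p : MPath X d M v w) (hw : CriticalV X M w) :
    (v.1 < w.1 → False) ∧
    (v.1 = w.1 → ∀ (j : ℕ) (a : X (j + 1)) (b : X j), (a, b) ∈ M j →
      v = ⟨j + 1, a⟩ → False) := by
  induction p with
  | nil v => exact ⟨fun h => lt_irrefl _ h, fun _ j a b hab hv => (hw j a b hab).1 hv⟩
  | down i c c' hne hnm w p ih =>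
    have ih := ih hw
    refine ⟨fun h => ih.1 ?_, fun h _ _ _ _ _ => ih.1 ?_⟩
    · simp only at h ⊢; omega
    · simp only at h ⊢; omega
  | up i c c' hmem w p ih =>
    have ih := ih hw
    refine ⟨fun h => ?_, fun h j a b hab hv => ?_⟩
    · rcases Nat.lt_or_ge (i + 1) w.1 with h' | h'
      · exact ih.1 h'
      · refine ih.2 ?_ i c c' hmem rfl
        simp only at h ⊢; omega
    · cases hv
      exact hM.2.2.2.1 j c a b hmem hab

/-- Immediate predecessor relation inside one homological degree. -/
def auxRel (i : ℕ) (b' b : X i) : Prop :=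
  ∃ c : X (i + 1), (c, b) ∈ M i ∧ (c, b') ∉ M i ∧ d i c b' ≠ 0

theorem auxRel_wf (hM : IsAcyclicMatching X d M) (i : ℕ) :
    WellFounded (auxRel X d M i) := by
  have key : ∀ x y : X i, Relation.TransGen (auxRel X d M i) x y →
      Relation.TransGen (MStep X d M) ⟨i, y⟩ ⟨i, x⟩ := by
    intro x y h
    have one : ∀ x y : X i, auxRel X d M i x y →
        Relation.TransGen (MStep X d M) ⟨i, y⟩ ⟨i, x⟩ := by
      rintro x y ⟨c, h1, h2, h3⟩
      exact (Relation.TransGen.single (MStep.up i c y h1)).tail (MStep.down i c x h3 h2)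
    induction h with
    | single h => exact one _ _ h
    | tail _ h ih => exact (one _ _ h).trans ih
  have : Std.Irrefl (Relation.TransGen (auxRel X d M i)) :=
    ⟨fun x h => hM.2.2.2.2.2 _ (key x x h)⟩
  have wf : WellFounded (Relation.TransGen (auxRel X d M i)) :=
    Finite.wellFounded_of_trans_of_irrefl _
  exact Subrelation.wf (fun h => Relation.TransGen.single h) wf

theorem aux_up_bij (hM : IsAcyclicMatching X d M) (i : ℕ) (b w : X i)
    (hw : CriticalV X M ⟨i, w⟩) (c : X (i + 1)) (h : (c, b) ∈ M i) :
    Function.Bijective (fun p : MPath X d M ⟨i + 1, c⟩ ⟨i, w⟩ =>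
      MPath.up (d := d) (M := M) i c b h ⟨i, w⟩ p) := by
  constructor
  · intro p q hpq
    simpa using hpq
  · intro p
    cases p with
    | nil =>
      exact absurd rfl (hw i c b h).2
    | down j c1 c' hne hnm _ p =>
      exact ((aux_nopath X d M hM p hw).1 (Nat.lt_succ_self _)).elim
    | up j c1 c' hmem _ p =>
      obtain rfl := hM.2.2.1 _ _ _ _ h hmem
      exact ⟨p, rfl⟩

theorem aux_down_bij (i : ℕ) (c : X (i + 1)) (w : X i)
    (hc : ∀ e : X (i + 2), (e, c) ∉ M (i + 1)) :
    Function.Bijective (fun p : (Σ b : {b : X i // (c, b) ∉ M i ∧ d i c b ≠ 0},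
        MPath X d M ⟨i, b.1⟩ ⟨i, w⟩) =>
      MPath.down (d := d) (M := M) i c p.1.1 p.1.2.2 p.1.2.1 ⟨i, w⟩ p.2) := by
  constructor
  · rintro ⟨⟨b, hb⟩, p⟩ ⟨⟨b', hb'⟩, q⟩ hpq
    simp only [MPath.down.injEq] at hpq
    obtain ⟨rfl, h⟩ := hpq
    cases h
    rfl
  · intro p
    cases p with
    | down j c1 c' hne hnm _ p =>
      exact ⟨⟨⟨c', hnm, hne⟩, p⟩, rfl⟩
    | up j c1 c' hmem _ p =>
      exact (hc _ hmem).elim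

theorem aux_nil (hM : IsAcyclicMatching X d M) (i : ℕ) (b w : X i)
    (hw : CriticalV X M ⟨i, w⟩) (hb : ∀ c : X (i + 1), (c, b) ∉ M i)
    (p : MPath X d M ⟨i, b⟩ ⟨i, w⟩) :
    ∃ h : b = w, p = h ▸ MPath.nil ⟨i, b⟩ := by
  cases p with
  | nil =>
    exact ⟨rfl, rfl⟩
  | down j c1 c' hne hnm _ p =>
    exact ((aux_nopath X d M hM p hw).1 (Nat.lt_succ_self _)).elim
  | up j c1 c' hmem _ p =>
    exact (hb _ hmem).elim

theorem aux_matched_not_up (hM : IsAcyclicMatching X d M) (i : ℕ) (c : X (i + 1)) (b : X i)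
    (h : (c, b) ∈ M i) (e : X (i + 2)) : (e, c) ∉ M (i + 1) :=
  fun he => hM.2.2.2.1 i e c b he h

theorem aux_finite (hM : IsAcyclicMatching X d M) (i : ℕ) (w : X i)
    (hw : CriticalV X M ⟨i, w⟩) (b : X i) : Finite (MPath X d M ⟨i, b⟩ ⟨i, w⟩) := by
  induction b using (auxRel_wf X d M hM i).induction with
  | _ b ih =>
    by_cases hb : ∃ c : X (i + 1), (c, b) ∈ M i
    · obtain ⟨c, hc⟩ := hb
      have : ∀ b' : {b : X i // (c, b) ∉ M i ∧ d i c b ≠ 0},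
          Finite (MPath X d M ⟨i, b'.1⟩ ⟨i, w⟩) := fun b' => ih b'.1 ⟨c, hc, b'.2⟩
      have f1 := Finite.of_surjective _
        (aux_down_bij X d M i c w (aux_matched_not_up X d M hM i c b hc)).2
      exact Finite.of_surjective _ (aux_up_bij X d M hM i b w hw c hc).2
    · push Not at hb
      have : Subsingleton (MPath X d M ⟨i, b⟩ ⟨i, w⟩) := by
        constructor
        intro p q
        obtain ⟨h, hp⟩ := aux_nil X d M hM i b w hw hb p
        obtain ⟨h', hq⟩ := aux_nil X d M hM i b w hw hb q
        rw [hp, hq]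
      infer_instance

theorem Gamma_unmatched (hM : IsAcyclicMatching X d M) (i : ℕ) (b w : X i)
    (hw : CriticalV X M ⟨i, w⟩) (hb : ∀ c : X (i + 1), (c, b) ∉ M i) :
    Gamma X d M ⟨i, b⟩ ⟨i, w⟩ = if b = w then 1 else 0 := by
  unfold Gamma
  split_ifs with h
  · subst h
    have hu : ∀ p : MPath X d M ⟨i, b⟩ ⟨i, b⟩, p = MPath.nil _ := by
      intro p
      obtain ⟨h, hp⟩ := aux_nil X d M hM i b b hw hb p
      exact hp
    rw [finsum_eq_single _ (MPath.nil _) (fun p hp => (hp (hu p)).elim)]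
    simp [MPath.weight]
  · have : IsEmpty (MPath X d M ⟨i, b⟩ ⟨i, w⟩) :=
      ⟨fun p => h (aux_nil X d M hM i b w hw hb p).1⟩
    exact finsum_of_isEmpty _

theorem Gamma_down (hM : IsAcyclicMatching X d M) (i : ℕ) (c : X (i + 1)) (w : X i)
    (hw : CriticalV X M ⟨i, w⟩) (hc : ∀ e : X (i + 2), (e, c) ∉ M (i + 1)) :
    Gamma X d M ⟨i + 1, c⟩ ⟨i, w⟩ =
      ∑ b : X i, if (c, b) ∈ M i then 0 else d i c b * Gamma X d M ⟨i, b⟩ ⟨i, w⟩ := by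
  have hf := aux_finite X d M hM i w hw
  have hF : ∀ b, Fintype (MPath X d M ⟨i, b⟩ ⟨i, w⟩) := fun b => Fintype.ofFinite _
  have e1 : Gamma X d M ⟨i + 1, c⟩ ⟨i, w⟩ =
      ∑ᶠ p : (Σ b : {b : X i // (c, b) ∉ M i ∧ d i c b ≠ 0},
        MPath X d M ⟨i, b.1⟩ ⟨i, w⟩), d i c p.1.1 * MPath.weight X d M p.2 := by
    symm
    exact finsum_eq_of_bijective _ (aux_down_bij X d M i c w hc) (fun p => rfl)
  rw [e1, finsum_eq_sum_of_fintype, Fintype.sum_sigma]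
  simp only [← Finset.mul_sum]
  have e2 : ∀ b, Gamma X d M ⟨i, b⟩ ⟨i, w⟩ = ∑ p : MPath X d M ⟨i, b⟩ ⟨i, w⟩,
      MPath.weight X d M p := fun b => finsum_eq_sum_of_fintype _
  simp only [← e2]
  rw [← Finset.sum_subtype (Finset.univ.filter fun b => (c, b) ∉ M i ∧ d i c b ≠ 0)
    (by simp) (fun b => d i c b * Gamma X d M ⟨i, b⟩ ⟨i, w⟩), Finset.sum_filter]
  refine Finset.sum_congr rfl fun b _ => ?_
  by_cases h1 : (c, b) ∈ M i
  · simp [h1]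
  · by_cases h2 : d i c b = 0
    · simp [h2]
    · simp [h1, h2]

theorem Gamma_up (hM : IsAcyclicMatching X d M) (i : ℕ) (b w : X i)
    (hw : CriticalV X M ⟨i, w⟩) (c : X (i + 1)) (h : (c, b) ∈ M i) :
    Gamma X d M ⟨i, b⟩ ⟨i, w⟩ =
      -(Ring.inverse (d i c b)) * Gamma X d M ⟨i + 1, c⟩ ⟨i, w⟩ := by
  have hf := aux_finite X d M hM i w hw b
  have hf' : Finite (MPath X d M ⟨i + 1, c⟩ ⟨i, w⟩) :=
    Finite.of_injective _ (aux_up_bij X d M hM i b w hw c h).1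
  have e1 : Gamma X d M ⟨i, b⟩ ⟨i, w⟩ = ∑ᶠ p : MPath X d M ⟨i + 1, c⟩ ⟨i, w⟩,
      -(Ring.inverse (d i c b)) * MPath.weight X d M p := by
    symm
    exact finsum_eq_of_bijective _ (aux_up_bij X d M hM i b w hw c h) (fun p => rfl)
  have := Fintype.ofFinite (MPath X d M ⟨i + 1, c⟩ ⟨i, w⟩)
  rw [e1, Gamma, finsum_eq_sum_of_fintype, finsum_eq_sum_of_fintype, Finset.mul_sum]

/-- For a matched edge `(c,b)`, the sum over non-matched faces plus the matched term. -/
theorem aux_sum_matched (hM : IsAcyclicMatching X d M) (i : ℕ) (c : X (i + 1)) (b : X i)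
    (h : (c, b) ∈ M i) (g : X i → R) :
    ∑ b', d i c b' * g b' = (∑ b', if (c, b') ∈ M i then 0 else d i c b' * g b')
      + d i c b * g b := by
  have : d i c b * g b = ∑ b', if (c, b') ∈ M i then d i c b' * g b' else 0 := by
    rw [Finset.sum_eq_single b]
    · simp [h]
    · intro b' _ hne
      rw [if_neg]
      exact fun h' => hne (hM.2.1 i c b' b h' h)
    · simp
  rw [this, ← Finset.sum_add_distrib]
  refine Finset.sum_congr rfl fun b' _ => ?_
  split_ifs <;> simp

theorem crit_up {i : ℕ} {c : X i} (hc : CriticalV X M ⟨i, c⟩) (e : X (i + 1)) :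
    (e, c) ∉ M i := fun h => (hc i e c h).2 rfl

theorem crit_down {i : ℕ} {c : X (i + 1)} (hc : CriticalV X M ⟨i + 1, c⟩) (b : X i) :
    (c, b) ∉ M i := fun h => (hc i c b h).1 rfl

/-- The boundary of `a = Γ(-,w)` is zero on cells matched downwards. -/
theorem aux_bd_matched (hM : IsAcyclicMatching X d M) (i : ℕ) (c : X (i + 1)) (b w : X i)
    (hw : CriticalV X M ⟨i, w⟩) (h : (c, b) ∈ M i) :
    ∑ b', d i c b' * Gamma X d M ⟨i, b'⟩ ⟨i, w⟩ = 0 := by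
  rw [aux_sum_matched X d M hM i c b h, Gamma_up X d M hM i b w hw c h,
    ← Gamma_down X d M hM i c w hw (aux_matched_not_up X d M hM i c b h),
    ← mul_assoc, mul_neg, Ring.mul_inverse_cancel _ (hM.2.2.2.2.1 i c b h).2]
  simp

theorem aux_bd_crit (hM : IsAcyclicMatching X d M) (i : ℕ) (c : X (i + 1)) (w : X i)
    (hw : CriticalV X M ⟨i, w⟩) (hc : CriticalV X M ⟨i + 1, c⟩) :
    Gamma X d M ⟨i + 1, c⟩ ⟨i, w⟩ = ∑ b', d i c b' * Gamma X d M ⟨i, b'⟩ ⟨i, w⟩ := by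
  rw [Gamma_down X d M hM i c w hw (crit_up X M hc)]
  exact Finset.sum_congr rfl fun b _ => if_neg (crit_down X M hc b)

/-- A cocycle `g` vanishing on the cells matched downwards is recovered from its critical
values. -/
theorem aux_recover (hM : IsAcyclicMatching X d M) (i : ℕ) (g : X i → R)
    (hg : ∀ e : X (i + 1), ∑ c, d i e c * g c = 0)
    (hg0 : ∀ c : X i, (∀ e : X (i + 1), (e, c) ∉ M i) → ¬ CriticalV X M ⟨i, c⟩ → g c = 0)
    (c₀ : X i) :
    ∑ c : Crit X M i, Gamma X d M ⟨i, c₀⟩ ⟨i, c.1⟩ * g c.1 = g c₀ := by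
  induction c₀ using (auxRel_wf X d M hM i).induction with
  | _ c₀ ih =>
    by_cases hb : ∃ e : X (i + 1), (e, c₀) ∈ M i
    · obtain ⟨e, he⟩ := hb
      have hn := aux_matched_not_up X d M hM i e c₀ he
      have h1 : ∀ c : Crit X M i, Gamma X d M ⟨i, c₀⟩ ⟨i, c.1⟩ * g c.1 =
          -(Ring.inverse (d i e c₀)) * ∑ b : X i, if (e, b) ∈ M i then 0 else
            d i e b * (Gamma X d M ⟨i, b⟩ ⟨i, c.1⟩ * g c.1) := by
        intro c
        rw [Gamma_up X d M hM i c₀ c.1 c.2 e he, Gamma_down X d M hM i e c.1 c.2 hn,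
          mul_assoc, Finset.sum_mul]
        congr 1
        refine Finset.sum_congr rfl fun b _ => ?_
        split_ifs <;> simp [mul_assoc]
      simp only [h1]
      rw [← Finset.mul_sum, Finset.sum_comm]
      have h2 : ∀ b : X i, (∑ c : Crit X M i, if (e, b) ∈ M i then 0 else
            d i e b * (Gamma X d M ⟨i, b⟩ ⟨i, c.1⟩ * g c.1)) =
          if (e, b) ∈ M i then 0 else d i e b * g b := by
        intro b
        split_ifs with hm
        · simp
        · rw [← Finset.mul_sum]
          by_cases h0 : d i e b = 0
          · simp [h0]
          · rw [ih b ⟨e, he, hm, h0⟩]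
      simp only [h2]
      have h3 := hg e
      rw [aux_sum_matched X d M hM i e c₀ he g] at h3
      rw [eq_neg_of_add_eq_zero_left h3, neg_mul_neg, ← mul_assoc,
        Ring.inverse_mul_cancel _ (hM.2.2.2.2.1 i e c₀ he).2, one_mul]
    · push Not at hb
      by_cases hc : CriticalV X M ⟨i, c₀⟩
      · rw [Finset.sum_eq_single ⟨c₀, hc⟩]
        · rw [Gamma_unmatched X d M hM i c₀ c₀ hc hb]
          simp
        · intro c _ hne
          rw [Gamma_unmatched X d M hM i c₀ c.1 c.2 hb, if_neg, zero_mul]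
          rintro rfl
          exact hne rfl
        · simp
      · rw [hg0 c₀ hb hc]
        refine Finset.sum_eq_zero fun c _ => ?_
        rw [Gamma_unmatched X d M hM i c₀ c.1 c.2 hb, if_neg, zero_mul]
        rintro rfl
        exact hc c.2

theorem aux_main (hC : IsComplexAux X d) (hM : IsAcyclicMatching X d M) (i : ℕ)
    (e : Crit X M (i + 2)) (w : Crit X M i) :
    ∑ c : Crit X M (i + 1), Gamma X d M ⟨i + 2, e.1⟩ ⟨i + 1, c.1⟩ *
      Gamma X d M ⟨i + 1, c.1⟩ ⟨i, w.1⟩ = 0 := by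
  set g : X (i + 1) → R := fun c => ∑ b', d i c b' * Gamma X d M ⟨i, b'⟩ ⟨i, w.1⟩ with hgdef
  have hg : ∀ e : X (i + 2), ∑ c, d (i + 1) e c * g c = 0 := by
    intro e
    simp only [hgdef, Finset.mul_sum]
    rw [Finset.sum_comm]
    refine Finset.sum_eq_zero fun b _ => ?_
    simp only [← mul_assoc]
    rw [← Finset.sum_mul, hC i e b, zero_mul]
  have hg0 : ∀ c : X (i + 1), (∀ e : X (i + 2), (e, c) ∉ M (i + 1)) →
      ¬ CriticalV X M ⟨i + 1, c⟩ → g c = 0 := by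
    intro c h1 h2
    unfold CriticalV at h2
    push Not at h2
    obtain ⟨j, a, b, hab, h⟩ := h2
    by_cases h3 : (⟨i + 1, c⟩ : Σ i, X i) = ⟨j + 1, a⟩
    · cases h3
      exact aux_bd_matched X d M hM i c b w.1 w.2 hab
    · have h4 := h h3
      cases h4
      exact (h1 a hab).elim
  have key : ∀ c : Crit X M (i + 1), Gamma X d M ⟨i + 2, e.1⟩ ⟨i + 1, c.1⟩ *
      Gamma X d M ⟨i + 1, c.1⟩ ⟨i, w.1⟩ =
      ∑ b, d (i + 1) e.1 b * (Gamma X d M ⟨i + 1, b⟩ ⟨i + 1, c.1⟩ * g c.1) := by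
    intro c
    rw [aux_bd_crit X d M hM i c.1 w.1 w.2 c.2,
      aux_bd_crit X d M hM (i + 1) e.1 c.1 c.2 e.2, Finset.sum_mul]
    simp only [mul_assoc, hgdef]
  simp only [key]
  rw [Finset.sum_comm]
  simp only [← Finset.mul_sum, aux_recover X d M hM (i + 1) g hg hg0]
  exact hg e.1

end Helpers

/-- Lemma B.1 (P1).  If `M` is an acyclic matching on the graph
`G(C)` of the chain complex `C`, then the Morse maps square to zero:
`∂^M_i ∘ ∂^M_{i+1} = 0` for all `i ≥ 0`, so `(C^M, ∂^M)` is a chain complex. -/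
theorem morse_differential_squared_zero
    (hC : IsComplexAux X d) (hM : IsAcyclicMatching X d M) :
    ∀ i, DMmap X d M i ∘ₗ DMmap X d M (i + 1) = 0 := by
  intro i
  ext v w
  simp only [DMmap, liftMap, LinearMap.comp_apply, LinearMap.coe_mk, AddHom.coe_mk,
    LinearMap.zero_apply, Pi.zero_apply, Finset.sum_mul]
  rw [Finset.sum_comm]
  simp only [mul_assoc, ← Finset.mul_sum]
  refine Finset.sum_eq_zero fun e _ => ?_
  rw [aux_main X d M hC hM i e w, mul_zero]


end ADMT

end
end

section
/- Let M be an acyclic matching on the graph G(C•) of the chain complex C•. Then f ∘ g is the identity map of the Morse complex: f_i ∘ g_i = id on C_i^M for every i ≥ 0. -/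
/-!
Algebraic Discrete Morse theory (Jöllenbeck–Welker).

Setup: `R` is a (possibly noncommutative) ring and `C` is a chain complex of free
left `R`-modules `C i = X i → R` with fixed finite basis `X i` in homological
degree `i`; the differential is `∂ i (c) = ∑ c', d i c c' • c'` (we record only the
matrix of coefficients `d`).  `M` is a matching on the associated weighted directed
graph, `MStep` describes the edges of the modified graph `G_M`, `MPath` the directed
paths, `Gamma v w` the sum of the weights of all paths from `v` to `w`, `Crit` the
critical basis elements, `DMmap` the Morse differential, and `fmap`, `gmap`, `chimap`
the comparison maps and the homotopy.
-/

attribute [local instance] Classical.propDecidable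

noncomputable section

section ADMT

variable {R : Type} [Ring R]
variable (X : ℕ → Type) [∀ i, Fintype (X i)]
variable (d : ∀ i, X (i + 1) → X i → R)
variable (M : ∀ i, Set (X (i + 1) × X i))

/-- Top of a matched edge. -/
def IsTopV (v : Σ i, X i) : Prop :=
  ∃ (j : ℕ) (a : X (j + 1)) (b : X j), (a, b) ∈ M j ∧ v = ⟨j + 1, a⟩

/-- Bottom of a matched edge. -/
def IsBotV (v : Σ i, X i) : Prop :=
  ∃ (j : ℕ) (a : X (j + 1)) (b : X j), (a, b) ∈ M j ∧ v = ⟨j, b⟩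

theorem not_top_of_bot (hM : IsAcyclicMatching X d M) (v : Σ i, X i)
    (hb : IsBotV X M v) (ht : IsTopV X M v) : False := by
  obtain ⟨j, a, b, hab, rfl⟩ := hb
  obtain ⟨k, a', b', hab', h⟩ := ht
  cases h
  exact hM.2.2.2.1 _ _ _ _ hab hab'

theorem path_nil (hM : IsAcyclicMatching X d M) {v w : Σ i, X i}
    (p : MPath X d M v w) (hw : ¬ IsTopV X M w) :
    w.1 ≤ v.1 ∧ (¬ IsBotV X M v → w.1 = v.1 → v = w ∧ HEq p (MPath.nil (X := X) (d := d) (M := M) v)) := by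
  induction p with
  | nil v => exact ⟨le_rfl, fun _ _ => ⟨rfl, HEq.rfl⟩⟩
  | down i c c' hne hnm w p ih =>
    have h := (ih hw).1
    dsimp only at h ⊢
    exact ⟨by omega, fun _ h' => by omega⟩
  | up i c c' hmem w p ih =>
    have h := ih hw
    refine ⟨?_, fun hb => absurd ⟨i, c, c', hmem, rfl⟩ hb⟩
    have hc : ¬ IsBotV X M ⟨i + 1, c⟩ := fun hb =>
      not_top_of_bot X d M hM _ hb ⟨i, c, c', hmem, rfl⟩
    have hne : w.1 ≠ i + 1 := by
      intro he
      have := (h.2 hc he).1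
      exact hw ⟨i, c, c', hmem, this.symm⟩
    have := h.1
    dsimp only at this ⊢
    omega

theorem Gamma_delta (hM : IsAcyclicMatching X d M) (i : ℕ) (x y : X i)
    (hx : ¬ IsBotV X M ⟨i, x⟩) (hy : ¬ IsTopV X M ⟨i, y⟩) :
    Gamma X d M ⟨i, x⟩ ⟨i, y⟩ = if x = y then 1 else 0 := by
  unfold Gamma
  split_ifs with h
  · subst h
    rw [finsum_eq_single _ (MPath.nil _)]
    · simp [MPath.weight]
    · intro p hp
      exact absurd (eq_of_heq ((path_nil X d M hM p hy).2 hx rfl).2) hp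
  · have : IsEmpty (MPath X d M ⟨i, x⟩ ⟨i, y⟩) := ⟨fun p => by
      have := ((path_nil X d M hM p hy).2 hx rfl).1
      cases this
      exact h rfl⟩
    exact finsum_of_isEmpty _

theorem Gamma_comp (hM : IsAcyclicMatching X d M) (i : ℕ) (x y : Crit X M i) :
    ∑ z : X i, Gamma X d M ⟨i, x.1⟩ ⟨i, z⟩ * Gamma X d M ⟨i, z⟩ ⟨i, y.1⟩ =
      if x = y then 1 else 0 := by
  have hb : ∀ x : Crit X M i, ¬ IsBotV X M ⟨i, x.1⟩ := fun x ⟨j, a, b, h, e⟩ => (x.2 j a b h).2 e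
  have ht : ∀ x : Crit X M i, ¬ IsTopV X M ⟨i, x.1⟩ := fun x ⟨j, a, b, h, e⟩ => (x.2 j a b h).1 e
  rw [Finset.sum_eq_single y.1]
  · rw [Gamma_delta X d M hM i _ _ (hb x) (ht y), Gamma_delta X d M hM i _ _ (hb y) (ht y)]
    simp [Subtype.ext_iff]
  · intro z _ hz
    by_cases hzb : IsBotV X M ⟨i, z⟩
    · rw [Gamma_delta X d M hM i x.1 z (hb x) (fun h => not_top_of_bot X d M hM _ hzb h)]
      rw [if_neg, zero_mul]
      rintro rfl
      exact hb x hzb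
    · rw [Gamma_delta X d M hM i z y.1 hzb (ht y), if_neg hz, mul_zero]
  · simp

/-- Lemma B.3 (H2).  If `M` is an acyclic matching on the graph
`G(C)` of the chain complex `C`, then `f ∘ g` is the identity of the Morse complex:
`f_i ∘ g_i = id` on `C_i^M` for every `i ≥ 0`. -/
theorem fmap_comp_gmap_eq_id
    (hC : IsComplexAux X d) (hM : IsAcyclicMatching X d M) :
    ∀ i, fmap X d M i ∘ₗ gmap X d M i = LinearMap.id := by
  intro i
  refine LinearMap.ext fun v => ?_
  funext y
  change ∑ z : X i, (∑ x : Crit X M i, v x * Gamma X d M ⟨i, x.1⟩ ⟨i, z⟩) *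
    Gamma X d M ⟨i, z⟩ ⟨i, y.1⟩ = v y
  simp_rw [Finset.sum_mul, mul_assoc]
  rw [Finset.sum_comm]
  simp_rw [← Finset.mul_sum, Gamma_comp X d M hM]
  simp

end ADMT

end
end
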